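/- Let X ⊂ ℝ² be a compact convex polygonal region and let μ : X → ℝ be a continuous strictly positive density. Consider the Lloyd iteration x(k+1) = c(V(x(k))), where V(x) = (V_1(x), …, V_N(x)) is the Voronoi partition of X generated by x = (x_1, …, x_N) and c(V(x)) = (c_1(V_1(x)), …, c_N(V_N(x))) is the corresponding vector of centroids with respect to μ. Then every solution (x(k))_{k≥0} whose iterates consist of distinct points converges, as k → ∞, to the set C of centroidal Voronoi configurations, i.e. dist(x(k), C) → 0 where C = { x ∈ Xᴺ with distinct entries : x_i = c_i(V_i(x)) for all i = 1, …, N }. -/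

import Mathlib

open MeasureTheory Filter

/-- The plane `ℝ²`. -/
abbrev E2 : Type := EuclideanSpace ℝ (Fin 2)

/-!
The mean squared distance to the nearest generator (the distortion) is a Lyapunov function. By the
parallel axis theorem, a Lloyd step lowers it by at least the sum over the cells of mass times
squared displacement of the generator, so these products tend to `0`. At a limit point with distinct
generators every cell has positive mass and the Lloyd map is continuous, so the limit is fixed.

It remains to see that generators cannot collide in the limit. The cell of a colliding generator
lies in the half-space bounded by its bisector with another one, and its generator approaches this
bisector; unless its mass tends to `0`, so does its centroid, and a set on one side of a hyperplane
with centroid near that hyperplane is a thin slab. Hence all colliding cells lose their mass,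
although together they cover a fixed neighbourhood of the collision point, which has positive mass.
-/

open Metric Set Function
open scoped Topology RealInnerProductSpace

section Limits

variable {κ : Type*} {l : Filter κ}

lemma tendsto_zero_of_le_sub_succ {a b : ℕ → ℝ} (ha : ∀ n, 0 ≤ a n) (hb : ∀ n, 0 ≤ b n)
    (hab : ∀ n, a n ≤ b n - b (n + 1)) : Tendsto a atTop (𝓝 0) := by
  refine (summable_of_sum_range_le ha (c := b 0) fun n => ?_).tendsto_atTop_zero
  calc ∑ k ∈ Finset.range n, a k
      ≤ ∑ k ∈ Finset.range n, (b k - b (k + 1)) := Finset.sum_le_sum fun k _ => hab k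
    _ = b 0 - b n := Finset.sum_range_sub' b n
    _ ≤ b 0 := sub_le_self _ (hb n)

lemma tendsto_mul_zero_of_tendsto_mul_sq {a b : κ → ℝ} {M : ℝ} (ha : ∀ n, |a n| ≤ M)
    (hab : Tendsto (fun n => a n * b n ^ 2) l (𝓝 0)) : Tendsto (fun n => a n * b n) l (𝓝 0) := by
  have hsq : Tendsto (fun n => (a n * b n) ^ 2) l (𝓝 0) :=
    (bdd_le_mul_tendsto_zero' M (.of_forall ha) hab).congr fun n => by ring
  rw [tendsto_zero_iff_abs_tendsto_zero]
  simpa only [comp_def, Real.sqrt_sq_eq_abs, Real.sqrt_zero] using hsq.sqrt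

lemma tendsto_measureReal_zero_of_tendsto_setIntegral_zero {α : Type*} [MeasurableSpace α]
    {ν : Measure α} [IsFiniteMeasure ν] {g : α → ℝ} (hg : Integrable g ν)
    (hg_pos : ∀ᵐ q ∂ν, 0 < g q) {A : κ → Set α}
    (hA : Tendsto (fun n => ∫ q in A n, g q ∂ν) l (𝓝 0)) :
    Tendsto (fun n => ν.real (A n)) l (𝓝 0) := by
  set ρ : Measure α := ν.withDensity fun q => ENNReal.ofReal (g q)
  have hg_nonneg : 0 ≤ᵐ[ν] g := hg_pos.mono fun _ h => h.le
  have hρ : Tendsto (ρ ∘ A) l (𝓝 0) := by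
    rw [← ENNReal.ofReal_zero]
    refine ((ENNReal.continuous_ofReal.tendsto 0).comp hA).congr fun n => ?_
    rw [comp_apply, comp_apply, withDensity_apply',
      ofReal_integral_eq_lintegral_ofReal hg.restrict (ae_restrict_of_ae hg_nonneg)]
  have hνρ : ν = ρ.withDensity fun q => (ENNReal.ofReal (g q))⁻¹ :=
    (withDensity_inv_same₀ hg.aemeasurable.ennreal_ofReal
      (hg_pos.mono fun q h => (ENNReal.ofReal_pos.2 h).ne') (by simp)).symm
  have hfin : ∫⁻ q, (ENNReal.ofReal (g q))⁻¹ ∂ρ ≠ ⊤ := by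
    rw [← setLIntegral_univ, ← withDensity_apply _ .univ, ← hνρ]
    exact measure_ne_top ν univ
  have hν : Tendsto (fun n => ν (A n)) l (𝓝 0) :=
    (tendsto_setLIntegral_zero hfin hρ).congr fun n => by
      rw [← withDensity_apply', ← hνρ]
  simpa only [comp_def, measureReal_def, ENNReal.toReal_zero] using
    (ENNReal.tendsto_toReal ENNReal.zero_ne_top).comp hν

end Limits

section Moments

variable {E : Type*} [NormedAddCommGroup E] [MeasurableSpace E] {ν : Measure E}
  [IsFiniteMeasure ν]

lemma integrable_dist_sq (hν : MemLp id 2 ν) (p : E) : Integrable (fun q => dist q p ^ 2) ν := by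
  simpa only [dist_eq_norm, Pi.sub_apply, id_eq] using
    (hν.sub (memLp_const p)).integrable_norm_pow two_ne_zero

variable [InnerProductSpace ℝ E] [CompleteSpace E]

lemma integral_inner_sub (hν : Integrable id ν) (p e : E) :
    ∫ q, ⟪q - p, e⟫ ∂ν = ν.real univ * ⟪(⨍ q, q ∂ν) - p, e⟫ := by
  have hsub : Integrable (fun q => q - p) ν := hν.sub (integrable_const p)
  have hint : ∫ q, (q - p) ∂ν = ν.real univ • ((⨍ q, q ∂ν) - p) := by
    rw [integral_sub (f := fun q => q) hν (integrable_const p), integral_const, smul_sub,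
      measure_smul_average]
  simp only [real_inner_comm e]
  rw [integral_inner hsub e, hint, real_inner_smul_right]

lemma integral_dist_sq_eq_integral_dist_average_sq_add (hν : MemLp id 2 ν) (p : E) :
    ∫ q, dist q p ^ 2 ∂ν =
      ∫ q, dist q (⨍ q', q' ∂ν) ^ 2 ∂ν + ν.real univ * dist p (⨍ q', q' ∂ν) ^ 2 := by
  set c := ⨍ q', q' ∂ν with hc
  have hid : Integrable id ν := hν.integrable one_le_two
  have hexpand (q : E) : dist q p ^ 2 = dist q c ^ 2 + 2 * ⟪q - c, c - p⟫ + dist p c ^ 2 := by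
    rw [dist_comm p c, dist_eq_norm, dist_eq_norm, dist_eq_norm, ← norm_add_sq_real,
      sub_add_sub_cancel]
  have hcross : ∫ q, 2 * ⟪q - c, c - p⟫ ∂ν = 0 := by
    rw [integral_const_mul, integral_inner_sub hid, ← hc, sub_self, inner_zero_left, mul_zero,
      mul_zero]
  have hcross_int : Integrable (fun q => 2 * ⟪q - c, c - p⟫) ν :=
    ((hid.sub (integrable_const c)).inner_const (c - p)).const_mul 2
  simp_rw [hexpand]
  rw [integral_add (by exact (integrable_dist_sq hν c).add hcross_int) (integrable_const _),
    integral_add (integrable_dist_sq hν c) hcross_int, hcross, add_zero, integral_const,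
    smul_eq_mul]

end Moments

section HalfSpaces

variable {E : Type*} [NormedAddCommGroup E] [InnerProductSpace ℝ E]

lemma abs_inner_sub_le_of_inner_nonneg {q p w e e₀ : E} (hq : 0 ≤ ⟪q - p, e⟫) :
    |⟪q - w, e₀⟫| ≤ ⟪q - p, e⟫ + (‖q - w‖ * ‖e - e₀‖ + ‖p - w‖ * ‖e‖) := by
  have hsplit : ⟪q - w, e₀⟫ = ⟪q - p, e⟫ - ⟪q - w, e - e₀⟫ + ⟪p - w, e⟫ := by
    simp only [inner_sub_left, inner_sub_right]
    ring
  calc |⟪q - w, e₀⟫|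
      ≤ |⟪q - p, e⟫| + |⟪q - w, e - e₀⟫| + |⟪p - w, e⟫| := by
        rw [hsplit]
        exact (abs_add_le _ _).trans (by gcongr; exact abs_sub _ _)
    _ ≤ ⟪q - p, e⟫ + ‖q - w‖ * ‖e - e₀‖ + ‖p - w‖ * ‖e‖ := by
        rw [abs_of_nonneg hq]
        gcongr <;> exact abs_real_inner_le_norm _ _
    _ = _ := add_assoc _ _ _

lemma inner_sub_midpoint_nonneg_iff {q a b : E} :
    0 ≤ ⟪q - midpoint ℝ a b, a - b⟫ ↔ dist q a ≤ dist q b := by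
  have hdiff : dist q b ^ 2 - dist q a ^ 2 = 2 * ⟪q - midpoint ℝ a b, a - b⟫ := by
    simp only [dist_eq_norm, midpoint_eq_smul_add, invOf_eq_inv, norm_sub_sq_real, inner_sub_left,
      inner_sub_right, inner_smul_left, inner_add_left, RCLike.conj_to_real, real_inner_comm a b,
      real_inner_self_eq_norm_sq]
    ring
  rw [← mul_nonneg_iff_of_pos_left two_pos, ← hdiff, sub_nonneg, sq_le_sq₀ dist_nonneg dist_nonneg]

variable [MeasurableSpace E]

/-- The measures for which the boundaries between Voronoi cells are negligible: every
perpendicular bisector of two distinct points, hence every affine hyperplane, is null. -/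
def BisectorNull (ν : Measure E) : Prop :=
  ∀ ⦃a b : E⦄, a ≠ b → ν (AffineSubspace.perpBisector a b) = 0

lemma BisectorNull.ae_dist_ne {ν : Measure E} (hν : BisectorNull ν) {a b : E} (hab : a ≠ b) :
    ∀ᵐ q ∂ν, dist q a ≠ dist q b := by
  refine measure_mono_null (fun q hq => ?_) (hν hab)
  exact AffineSubspace.mem_perpBisector_iff_dist_eq.2 (not_not.1 hq)

lemma BisectorNull.ae_inner_sub_ne_zero {ν : Measure E} (hν : BisectorNull ν) (w : E) {e : E}
    (he : e ≠ 0) : ∀ᵐ q ∂ν, ⟪q - w, e⟫ ≠ 0 := by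
  have hab : w + e ≠ w - e := fun h =>
    have := IsAddTorsionFree.of_isTorsionFree ℝ E
    he (self_eq_neg.1 (by simpa [sub_eq_add_neg] using h))
  filter_upwards [hν.ae_dist_ne hab] with q hq hzero
  rw [dist_eq_norm, dist_eq_norm, ← sub_sub, ← sub_add] at hq
  exact hq (norm_sub_eq_norm_add (inner_eq_zero_symm.1 hzero))

lemma BisectorNull.of_absolutelyContinuous [BorelSpace E] [FiniteDimensional ℝ E]
    {ν ρ : Measure E} [ρ.IsAddHaarMeasure] (hνρ : ν ≪ ρ) : BisectorNull ν := fun a b hab =>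
  hνρ <| Measure.addHaar_affineSubspace _ _ <| by rwa [Ne, AffineSubspace.perpBisector_eq_top]

variable {ν : Measure E} [IsFiniteMeasure ν]

lemma setIntegral_abs_inner_sub_le [CompleteSpace E] (hid : Integrable id ν) {S : Set E}
    (hS : MeasurableSet S) {p w e : E} (hpos : ∀ q ∈ S, 0 ≤ ⟪q - p, e⟫) (e₀ : E) :
    ∫ q in S, |⟪q - w, e₀⟫| ∂ν ≤ ν.real S * dist (⨍ q in S, q ∂ν) p * ‖e‖ +
      ((∫ q, ‖q - w‖ ∂ν) * ‖e - e₀‖ + ν.real univ * (‖p - w‖ * ‖e‖)) := by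
  have hsub (a : E) : Integrable (fun q => q - a) ν := hid.sub (integrable_const a)
  have herr : Integrable (fun q => ‖q - w‖ * ‖e - e₀‖ + ‖p - w‖ * ‖e‖) ν :=
    ((hsub w).norm.mul_const _).add (integrable_const _)
  calc ∫ q in S, |⟪q - w, e₀⟫| ∂ν
      ≤ ∫ q in S, (⟪q - p, e⟫ + (‖q - w‖ * ‖e - e₀‖ + ‖p - w‖ * ‖e‖)) ∂ν :=
        setIntegral_mono_on ((hsub w).inner_const e₀).abs.integrableOn
          (((hsub p).inner_const e).add herr).integrableOn hS
          fun q hq => abs_inner_sub_le_of_inner_nonneg (hpos q hq)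
    _ = ν.real S * ⟪(⨍ q in S, q ∂ν) - p, e⟫ +
          ∫ q in S, (‖q - w‖ * ‖e - e₀‖ + ‖p - w‖ * ‖e‖) ∂ν := by
        rw [integral_add ((hsub p).inner_const e).restrict herr.restrict,
          integral_inner_sub hid.restrict, measureReal_restrict_apply_univ]
    _ ≤ ν.real S * (dist (⨍ q in S, q ∂ν) p * ‖e‖) +
          ∫ q, (‖q - w‖ * ‖e - e₀‖ + ‖p - w‖ * ‖e‖) ∂ν := by
        rw [dist_eq_norm]
        gcongr
        · exact real_inner_le_norm _ _
        · exact ae_of_all _ fun q => by positivity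
        · exact Measure.restrict_le_self
    _ = _ := by
        rw [integral_add ((hsub w).norm.mul_const _) (integrable_const _), integral_mul_const,
          integral_const, smul_eq_mul, mul_assoc]

variable {κ : Type*} {l : Filter κ} {A : κ → Set E}
  {p e : κ → E} {w : E}

/-- On `A n` the distance to the limiting hyperplane is at most the signed distance to the moving
one plus a vanishing error, and the centroid of `A n` gives the integral of the signed distance. -/
lemma tendsto_measureReal_zero_of_inner_nonneg_of_tendsto [CompleteSpace E]
    (hν : BisectorNull ν) (hid : Integrable id ν) {e₀ : E} (hAm : ∀ n, MeasurableSet (A n))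
    (hp : Tendsto p l (𝓝 w)) (he : Tendsto e l (𝓝 e₀)) (he₀ : e₀ ≠ 0)
    (hA : ∀ n, ∀ q ∈ A n, 0 ≤ ⟪q - p n, e n⟫)
    (hc : Tendsto (fun n => ν.real (A n) * dist (⨍ q in A n, q ∂ν) (p n)) l (𝓝 0)) :
    Tendsto (fun n => ν.real (A n)) l (𝓝 0) := by
  refine tendsto_measureReal_zero_of_tendsto_setIntegral_zero
    (g := fun q => |⟪q - w, e₀⟫|) ((hid.sub (integrable_const w)).inner_const e₀).abs
    ((hν.ae_inner_sub_ne_zero w he₀).mono fun q => abs_pos.2) ?_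
  refine squeeze_zero (fun n => integral_nonneg fun q => abs_nonneg _)
    (fun n => setIntegral_abs_inner_sub_le hid (hAm n) (hA n) e₀) ?_
  have hp_norm := tendsto_iff_norm_sub_tendsto_zero.1 hp
  have he_norm := tendsto_iff_norm_sub_tendsto_zero.1 he
  simpa only [zero_mul, mul_zero, add_zero] using (hc.mul he.norm).add
    ((he_norm.const_mul (∫ q, ‖q - w‖ ∂ν)).add ((hp_norm.mul he.norm).const_mul (ν.real univ)))

lemma tendsto_measureReal_zero_of_inner_nonneg [FiniteDimensional ℝ E] [l.IsCountablyGenerated]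
    (hν : BisectorNull ν) (hid : Integrable id ν) (hAm : ∀ n, MeasurableSet (A n))
    (hp : Tendsto p l (𝓝 w)) (he : ∀ n, ‖e n‖ = 1) (hA : ∀ n, ∀ q ∈ A n, 0 ≤ ⟪q - p n, e n⟫)
    (hc : Tendsto (fun n => ν.real (A n) * dist (⨍ q in A n, q ∂ν) (p n)) l (𝓝 0)) :
    Tendsto (fun n => ν.real (A n)) l (𝓝 0) := by
  refine tendsto_of_subseq_tendsto fun ns hns => ?_
  obtain ⟨e₀, he₀, φ, hφ, hφ_lim⟩ := (isCompact_sphere (0 : E) 1).tendsto_subseq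
    (x := e ∘ ns) fun n => by simp [he]
  have hsub : Tendsto (ns ∘ φ) atTop l := hns.comp hφ.tendsto_atTop
  exact ⟨φ, tendsto_measureReal_zero_of_inner_nonneg_of_tendsto hν hid (fun n => hAm _)
    (hp.comp hsub) hφ_lim (ne_zero_of_mem_unit_sphere ⟨e₀, he₀⟩) (fun n => hA _) (hc.comp hsub)⟩

end HalfSpaces

section VoronoiCells

variable {P ι : Type*} [PseudoMetricSpace P]

/-- The Voronoi cell of the generator `z i` in the whole space `P`; within a region `D` the cell is
`voronoiCell z i ∩ D`. -/
def voronoiCell (z : ι → P) (i : ι) : Set P := {q | ∀ j, dist q (z i) ≤ dist q (z j)}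

variable {z : ι → P}

lemma isClosed_voronoiCell (z : ι → P) (i : ι) : IsClosed (voronoiCell z i) := by
  simp only [voronoiCell, ofPred_forall]
  exact isClosed_iInter fun j => isClosed_le (by fun_prop) (by fun_prop)

lemma iUnion_voronoiCell [Finite ι] [Nonempty ι] (z : ι → P) : ⋃ i, voronoiCell z i = univ :=
  eq_univ_of_forall fun q => mem_iUnion.2 (Finite.exists_min fun i => dist q (z i))

lemma infDist_range_of_mem_voronoiCell {i : ι} {q : P} (hq : q ∈ voronoiCell z i) :
    infDist q (range z) = dist q (z i) :=
  le_antisymm (infDist_le_dist_of_mem (mem_range_self i))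
    ((le_infDist ⟨z i, mem_range_self i⟩).2 (forall_mem_range.2 hq))

lemma eventually_dist_lt_dist {q : P} {i j : ι} (h : dist q (z i) < dist q (z j)) :
    ∀ᶠ r : P × (ι → P) in 𝓝 (q, z), dist r.1 (r.2 i) < dist r.1 (r.2 j) :=
  ContinuousAt.eventually_lt (by fun_prop) (by fun_prop) h

lemma eventually_mem_voronoiCell_iff [Finite ι] {q : P} {i : ι}
    (hq : ∀ j, j ≠ i → dist q (z i) ≠ dist q (z j)) :
    ∀ᶠ y in 𝓝 z, q ∈ voronoiCell y i ↔ q ∈ voronoiCell z i := by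
  have hcont := (Continuous.prodMk_right q (Y := ι → P)).tendsto z
  by_cases hmem : q ∈ voronoiCell z i
  · have hall : ∀ᶠ y in 𝓝 z, ∀ j, dist q (y i) ≤ dist q (y j) := by
      refine eventually_all.2 fun j => ?_
      rcases eq_or_ne j i with rfl | hj
      · simp
      · exact (hcont.eventually (eventually_dist_lt_dist ((hmem j).lt_of_ne (hq j hj)))).mono
          fun _ => le_of_lt
    exact hall.mono fun y hy => iff_of_true hy hmem
  · obtain ⟨j, hj⟩ : ∃ j, dist q (z j) < dist q (z i) := by
      simpa only [voronoiCell, mem_ofPred_eq, not_forall, not_le] using hmem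
    exact (hcont.eventually (eventually_dist_lt_dist hj)).mono
      fun y hy => iff_of_false (fun h => (h j).not_gt hy) hmem

end VoronoiCells

section DistinctGenerators

variable {P ι : Type*} [MetricSpace P] [Finite ι] {z : ι → P}

lemma eventually_eq_of_mem_voronoiCell (z : ι → P) (i : ι) :
    ∀ᶠ r : P × (ι → P) in 𝓝 (z i, z), ∀ j, r.1 ∈ voronoiCell r.2 j → z j = z i := by
  refine eventually_all.2 fun j => ?_
  by_cases hj : z j = z i
  · exact .of_forall fun _ _ => hj
  · have hlt : dist (z i) (z i) < dist (z i) (z j) := by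
      rw [dist_self]
      exact dist_pos.2 (Ne.symm hj)
    filter_upwards [eventually_dist_lt_dist hlt] with r hr hmem
    exact absurd (hmem i) hr.not_ge

lemma voronoiCell_mem_nhds (hz : Injective z) (i : ι) : voronoiCell z i ∈ 𝓝 (z i) := by
  have : Nonempty ι := ⟨i⟩
  filter_upwards [(Continuous.prodMk_left z).tendsto (z i) |>.eventually
    (eventually_eq_of_mem_voronoiCell z i)] with q hq
  obtain ⟨j, hj⟩ := mem_iUnion.1 ((iUnion_voronoiCell z).ge (mem_univ q))
  exact hz (hq j hj) ▸ hj

end DistinctGenerators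

section VoronoiMeasure

variable {P ι : Type*} [MeasurableSpace P]

/-- The distortion of the generators `z`: the mean squared distance to the nearest generator, which
is the Lyapunov function of the Lloyd iteration. -/
noncomputable def distortion [PseudoMetricSpace P] (ν : Measure P) (z : ι → P) : ℝ :=
  ∫ q, infDist q (range z) ^ 2 ∂ν

lemma distortion_nonneg [PseudoMetricSpace P] (ν : Measure P) (z : ι → P) : 0 ≤ distortion ν z :=
  integral_nonneg fun _ => by positivity

lemma measureReal_voronoiCell_pos [MetricSpace P] [Finite ι] {ν : Measure P} [IsFiniteMeasure ν]
    {z : ι → P} (hz : Injective z) {i : ι} (hi : z i ∈ ν.support) :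
    0 < ν.real (voronoiCell z i) :=
  ENNReal.toReal_pos
    ((Measure.mem_support_iff_forall _).1 hi _ (voronoiCell_mem_nhds hz i)).ne' (measure_ne_top _ _)

lemma integrable_infDist_range_sq {E : Type*} [NormedAddCommGroup E] [MeasurableSpace E]
    [OpensMeasurableSpace E] {ν : Measure E} [IsFiniteMeasure ν] [Nonempty ι] (hν : MemLp id 2 ν)
    (z : ι → E) : Integrable (fun q => infDist q (range z) ^ 2) ν := by
  obtain ⟨i⟩ := ‹Nonempty ι›
  refine (integrable_dist_sq hν (z i)).mono' (by fun_prop) (ae_of_all _ fun q => ?_)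
  rw [Real.norm_of_nonneg (by positivity)]
  gcongr
  · exact infDist_nonneg
  · exact infDist_le_dist_of_mem (mem_range_self i)

end VoronoiMeasure

section LloydMap

variable {E ι : Type*} [NormedAddCommGroup E] [NormedSpace ℝ E] [MeasurableSpace E]

/-- One step of the Lloyd iteration: each generator moves to the `ν`-centroid of its Voronoi cell,
or to `0` if the cell is `ν`-null. -/
noncomputable def lloydMap (ν : Measure E) (z : ι → E) (i : ι) : E :=
  ⨍ q in voronoiCell z i, q ∂ν

/-- The centroidal Voronoi configurations of distinct generators in `K`, for mass distributed
according to `ν`. -/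
def centroidalVoronoi (ν : Measure E) (K : Set E) : Set (ι → E) :=
  {z | Injective z ∧ (∀ i, z i ∈ K) ∧ IsFixedPt (lloydMap ν) z}

end LloydMap

section Descent

variable {E ι : Type*} [NormedAddCommGroup E] [InnerProductSpace ℝ E] [MeasurableSpace E]
  [BorelSpace E] {ν : Measure E} {z : ι → E}

section CellIntegrals

variable [Finite ι] {F : Type*} [NormedAddCommGroup F] [NormedSpace ℝ F]

lemma continuousAt_setIntegral_voronoiCell (hν : BisectorNull ν) (hz : Injective z) {f : E → F}
    (hf : Integrable f ν) (i : ι) :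
    ContinuousAt (fun y : ι → E => ∫ q in voronoiCell y i, f q ∂ν) z := by
  have hmeas (y : ι → E) : MeasurableSet (voronoiCell y i) :=
    (isClosed_voronoiCell y i).measurableSet
  simp only [← integral_indicator (hmeas _)]
  refine continuousAt_of_dominated (bound := fun q => ‖f q‖)
    (.of_forall fun y => hf.aestronglyMeasurable.indicator (hmeas y))
    (.of_forall fun y => ae_of_all _ fun q => norm_indicator_le_norm_self _ _) hf.norm ?_
  have hne : ∀ᵐ q ∂ν, ∀ j, j ≠ i → dist q (z i) ≠ dist q (z j) :=
    ae_all_iff.2 fun j => eventually_imp_distrib_left.2 fun hj => hν.ae_dist_ne (hz.ne hj.symm)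
  filter_upwards [hne] with q hq
  refine tendsto_const_nhds.congr' ?_
  filter_upwards [eventually_mem_voronoiCell_iff hq] with y hy
  classical simp only [indicator_apply, hy]

lemma continuousAt_measureReal_voronoiCell [IsFiniteMeasure ν] (hν : BisectorNull ν)
    (hz : Injective z) (i : ι) : ContinuousAt (fun y : ι → E => ν.real (voronoiCell y i)) z := by
  simpa only [setIntegral_const, smul_eq_mul, mul_one] using
    continuousAt_setIntegral_voronoiCell hν hz (integrable_const (1 : ℝ)) i

lemma continuousAt_lloydMap_apply [IsFiniteMeasure ν] (hν : BisectorNull ν) (hid : Integrable id ν)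
    (hz : Injective z) {i : ι} (hi : z i ∈ ν.support) :
    ContinuousAt (fun y : ι → E => lloydMap ν y i) z := by
  simp only [lloydMap, setAverage_eq]
  exact ((continuousAt_measureReal_voronoiCell hν hz i).inv₀
    (measureReal_voronoiCell_pos hz hi).ne').smul (continuousAt_setIntegral_voronoiCell hν hz hid i)

end CellIntegrals

variable [Nonempty ι]

lemma integral_eq_sum_voronoiCell [Fintype ι] {F : Type*} [NormedAddCommGroup F] [NormedSpace ℝ F]
    (hν : BisectorNull ν) (hz : Injective z) {f : E → F} (hf : Integrable f ν) :
    ∫ q, f q ∂ν = ∑ i, ∫ q in voronoiCell z i, f q ∂ν := by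
  rw [← setIntegral_univ, ← iUnion_voronoiCell z, integral_iUnion_ae
    (fun i => (isClosed_voronoiCell z i).measurableSet.nullMeasurableSet) ?_ hf.integrableOn,
    tsum_fintype]
  intro i j hij
  refine measure_mono_null (fun q hq => ?_) (hν (hz.ne hij))
  exact AffineSubspace.mem_perpBisector_iff_dist_eq.2 (le_antisymm (hq.1 j) (hq.2 i))

variable [CompleteSpace E] [IsFiniteMeasure ν]

lemma sum_measureReal_mul_dist_sq_le [Fintype ι] (hν : BisectorNull ν) (hν₂ : MemLp id 2 ν)
    (hz : Injective z) :
    ∑ i, ν.real (voronoiCell z i) * dist (z i) (lloydMap ν z i) ^ 2 ≤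
      distortion ν z - distortion ν (lloydMap ν z) := by
  set c := lloydMap ν z
  have hcell (i : ι) : ∫ q in voronoiCell z i, infDist q (range z) ^ 2 ∂ν =
      ∫ q in voronoiCell z i, dist q (c i) ^ 2 ∂ν +
        ν.real (voronoiCell z i) * dist (z i) (c i) ^ 2 := by
    rw [setIntegral_congr_fun (g := fun q => dist q (z i) ^ 2)
      (isClosed_voronoiCell z i).measurableSet
      fun q hq => congrArg (· ^ 2) (infDist_range_of_mem_voronoiCell hq),
      integral_dist_sq_eq_integral_dist_average_sq_add (hν₂.restrict _),
      measureReal_restrict_apply_univ]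
    rfl
  have hnearest (i : ι) : ∫ q in voronoiCell z i, infDist q (range c) ^ 2 ∂ν ≤
      ∫ q in voronoiCell z i, dist q (c i) ^ 2 ∂ν := by
    refine setIntegral_mono (integrable_infDist_range_sq hν₂ c).integrableOn
      (integrable_dist_sq hν₂ (c i)).integrableOn fun q => ?_
    exact pow_le_pow_left₀ infDist_nonneg (infDist_le_dist_of_mem (mem_range_self i)) 2
  rw [le_sub_iff_add_le']
  calc distortion ν c + ∑ i, ν.real (voronoiCell z i) * dist (z i) (c i) ^ 2
      = ∑ i, (∫ q in voronoiCell z i, infDist q (range c) ^ 2 ∂ν +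
          ν.real (voronoiCell z i) * dist (z i) (c i) ^ 2) := by
        rw [distortion, integral_eq_sum_voronoiCell hν hz (integrable_infDist_range_sq hν₂ c),
          Finset.sum_add_distrib]
    _ ≤ ∑ i, (∫ q in voronoiCell z i, dist q (c i) ^ 2 ∂ν +
          ν.real (voronoiCell z i) * dist (z i) (c i) ^ 2) := by
        exact Finset.sum_le_sum fun i _ => by grw [hnearest i]
    _ = distortion ν z := by
        rw [distortion, integral_eq_sum_voronoiCell hν hz (integrable_infDist_range_sq hν₂ z)]
        exact Finset.sum_congr rfl fun i _ => (hcell i).symm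

lemma tendsto_measureReal_mul_dist_sq_zero [Finite ι] (hν : BisectorNull ν) (hν₂ : MemLp id 2 ν)
    {x : ℕ → ι → E} (hx_inj : ∀ k, Injective (x k)) (hx : ∀ k, x (k + 1) = lloydMap ν (x k))
    (i : ι) :
    Tendsto (fun k => ν.real (voronoiCell (x k) i) * dist (x k i) (lloydMap ν (x k) i) ^ 2)
      atTop (𝓝 0) := by
  have := Fintype.ofFinite ι
  have hterm (k : ℕ) (j : ι) :
      0 ≤ ν.real (voronoiCell (x k) j) * dist (x k j) (lloydMap ν (x k) j) ^ 2 := by positivity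
  refine tendsto_zero_of_le_sub_succ (hterm · i) (fun k => distortion_nonneg ν (x k)) fun k => ?_
  calc ν.real (voronoiCell (x k) i) * dist (x k i) (lloydMap ν (x k) i) ^ 2
      ≤ ∑ j, ν.real (voronoiCell (x k) j) * dist (x k j) (lloydMap ν (x k) j) ^ 2 :=
        Finset.single_le_sum (fun j _ => hterm k j) (Finset.mem_univ i)
    _ ≤ distortion ν (x k) - distortion ν (x (k + 1)) := by
        rw [hx k]
        exact sum_measureReal_mul_dist_sq_le hν hν₂ (hx_inj k)

end Descent

section ClusterPoints

variable {E ι : Type*} [NormedAddCommGroup E] [InnerProductSpace ℝ E] [FiniteDimensional ℝ E]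
  [MeasurableSpace E] [BorelSpace E] {ν : Measure E} [IsFiniteMeasure ν] {z : ι → E}
  {κ : Type*} {l : Filter κ} {y : κ → ι → E}

lemma tendsto_measureReal_voronoiCell_zero [l.IsCountablyGenerated] (hν : BisectorNull ν)
    (hid : Integrable id ν) (hy : Tendsto y l (𝓝 z)) (hy_inj : ∀ n, Injective (y n)) {i j : ι}
    (hij : i ≠ j) (hzij : z i = z j)
    (hlim : Tendsto (fun n => ν.real (voronoiCell (y n) i) *
      dist (y n i) (lloydMap ν (y n) i) ^ 2) l (𝓝 0)) :
    Tendsto (fun n => ν.real (voronoiCell (y n) i)) l (𝓝 0) := by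
  have hmass (n : κ) : |ν.real (voronoiCell (y n) i)| ≤ ν.real univ := by
    rw [abs_of_nonneg measureReal_nonneg]
    exact measureReal_mono (subset_univ _)
  have hyi (m : ι) : Tendsto (fun n => y n m) l (𝓝 (z m)) := tendsto_pi_nhds.1 hy m
  have hmid : Tendsto (fun n => midpoint ℝ (y n i) (y n j)) l (𝓝 (z i)) := by
    simpa only [← hzij, midpoint_self] using (hyi i).midpoint (hyi j)
  have hdist_mid : Tendsto (fun n => dist (y n i) (midpoint ℝ (y n i) (y n j))) l (𝓝 0) := by
    simpa only [dist_self] using (hyi i).dist hmid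
  have hbound := (tendsto_mul_zero_of_tendsto_mul_sq hmass hlim).add
    (bdd_le_mul_tendsto_zero' _ (.of_forall hmass) hdist_mid)
  rw [add_zero] at hbound
  refine tendsto_measureReal_zero_of_inner_nonneg hν hid
    (fun n => (isClosed_voronoiCell (y n) i).measurableSet) hmid
    (e := fun n => ‖y n i - y n j‖⁻¹ • (y n i - y n j))
    (fun n => norm_smul_inv_norm (𝕜 := ℝ) (sub_ne_zero.2 ((hy_inj n).ne hij)))
    (fun n q hq => ?_) ?_
  · rw [real_inner_smul_right]
    exact mul_nonneg (by positivity) (inner_sub_midpoint_nonneg_iff.2 (hq j))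
  · refine squeeze_zero (fun n => by positivity) (fun n => ?_) hbound
    rw [← mul_add]
    gcongr
    exact dist_triangle_left _ _ _

lemma injective_of_tendsto_of_tendsto_measureReal_mul_dist_sq [Finite ι] [l.NeBot]
    [l.IsCountablyGenerated] (hν : BisectorNull ν) (hid : Integrable id ν)
    (hz : ∀ i, z i ∈ ν.support) (hy : Tendsto y l (𝓝 z)) (hy_inj : ∀ n, Injective (y n))
    (hlim : ∀ i, Tendsto (fun n => ν.real (voronoiCell (y n) i) *
      dist (y n i) (lloydMap ν (y n) i) ^ 2) l (𝓝 0)) : Injective z := by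
  classical
  have := Fintype.ofFinite ι
  intro i j hzij
  by_contra hij
  set S : Finset ι := {m | z m = z i}
  have hmass_zero : Tendsto (fun n => ∑ m ∈ S, ν.real (voronoiCell (y n) m)) l (𝓝 0) := by
    rw [← Finset.sum_const_zero (s := S)]
    refine tendsto_finsetSum S fun m hm => ?_
    have hmi : z m = z i := (Finset.mem_filter.1 hm).2
    obtain ⟨m', hne, heq⟩ : ∃ m', m ≠ m' ∧ z m = z m' := by
      rcases eq_or_ne m i with rfl | h
      exacts [⟨j, hij, hzij⟩, ⟨i, h, hmi⟩]
    exact tendsto_measureReal_voronoiCell_zero hν hid hy hy_inj hne heq (hlim m)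
  have hev := eventually_eq_of_mem_voronoiCell z i
  rw [nhds_prod_eq, eventually_prod_iff] at hev
  obtain ⟨U, hU, W, hW, hUW⟩ := hev
  have hU_pos : 0 < ν.real {q | U q} :=
    ENNReal.toReal_pos ((Measure.mem_support_iff_forall _).1 (hz i) _ hU).ne' (measure_ne_top _ _)
  refine hU_pos.not_ge (ge_of_tendsto hmass_zero ?_)
  filter_upwards [hy.eventually hW] with n hn
  have hcover : {q | U q} ⊆ ⋃ m ∈ S, voronoiCell (y n) m := fun q hq => by
    have : Nonempty ι := ⟨i⟩
    obtain ⟨m, hm⟩ := mem_iUnion.1 ((iUnion_voronoiCell (y n)).ge (mem_univ q))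
    exact mem_biUnion (Finset.mem_filter.2 ⟨Finset.mem_univ m, hUW hq hn m hm⟩) hm
  exact (measureReal_mono hcover (measure_ne_top _ _)).trans (measureReal_biUnion_finset_le _ _)

lemma mem_centroidalVoronoi_of_tendsto [Finite ι] [l.NeBot] [l.IsCountablyGenerated] {K : Set E}
    (hν : BisectorNull ν) (hid : Integrable id ν) (hK : K ⊆ ν.support) (hz : ∀ i, z i ∈ K)
    (hy : Tendsto y l (𝓝 z)) (hy_inj : ∀ n, Injective (y n))
    (hlim : ∀ i, Tendsto (fun n => ν.real (voronoiCell (y n) i) *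
      dist (y n i) (lloydMap ν (y n) i) ^ 2) l (𝓝 0)) : z ∈ centroidalVoronoi ν K := by
  have hz_inj := injective_of_tendsto_of_tendsto_measureReal_mul_dist_sq hν hid
    (fun i => hK (hz i)) hy hy_inj hlim
  refine ⟨hz_inj, hz, funext fun i => ?_⟩
  have hi := hK (hz i)
  have hlim' : Tendsto (fun n => ν.real (voronoiCell (y n) i) *
      dist (y n i) (lloydMap ν (y n) i) ^ 2) l
      (𝓝 (ν.real (voronoiCell z i) * dist (z i) (lloydMap ν z i) ^ 2)) :=
    ((continuousAt_measureReal_voronoiCell hν hz_inj i).tendsto.comp hy).mul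
      (((tendsto_pi_nhds.1 hy i).dist
        ((continuousAt_lloydMap_apply hν hid hz_inj hi).tendsto.comp hy)).pow 2)
  have hzero := tendsto_nhds_unique hlim' (hlim i)
  have hpos := measureReal_voronoiCell_pos hz_inj hi
  exact (dist_eq_zero.1 (by simpa [hpos.ne'] using hzero)).symm

theorem tendsto_infDist_centroidalVoronoi [Fintype ι] [Nonempty ι]
    (hν : BisectorNull ν) (hν₂ : MemLp id 2 ν) {K : Set E} (hK : IsCompact K)
    (hKν : K ⊆ ν.support) {x : ℕ → ι → E} (hxK : ∀ k i, x k i ∈ K)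
    (hx_inj : ∀ k, Injective (x k)) (hx : ∀ k, x (k + 1) = lloydMap ν (x k)) :
    Tendsto (fun k => infDist (x k) (centroidalVoronoi ν K)) atTop (𝓝 0) := by
  refine tendsto_of_subseq_tendsto fun ns hns => ?_
  obtain ⟨z, hz, φ, hφ, hφz⟩ := (isCompact_univ_pi fun _ : ι => hK).tendsto_subseq
    (x := fun n => x (ns n)) fun n i _ => hxK _ i
  have hsub : Tendsto (fun n => ns (φ n)) atTop atTop := hns.comp hφ.tendsto_atTop
  have hzC : z ∈ centroidalVoronoi ν K :=
    mem_centroidalVoronoi_of_tendsto hν (hν₂.integrable one_le_two) hKν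
      (fun i => hz i (mem_univ i)) hφz (fun n => hx_inj _)
      fun i => (tendsto_measureReal_mul_dist_sq_zero hν hν₂ hx_inj hx i).comp hsub
  exact ⟨φ, squeeze_zero (fun n => infDist_nonneg) (fun n => infDist_le_dist_of_mem hzC)
    (tendsto_iff_dist_tendsto_zero.1 hφz)⟩

end ClusterPoints

section Densities

variable {α F : Type*} [MeasurableSpace α] [NormedAddCommGroup F] [NormedSpace ℝ F] {ρ : Measure α}

lemma setIntegral_withDensity_ofReal {f : α → ℝ} (hf : AEMeasurable f ρ) (hf_nonneg : 0 ≤ᵐ[ρ] f)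
    {s : Set α} (hs : MeasurableSet s) (g : α → F) :
    ∫ q in s, g q ∂ρ.withDensity (fun q => ENNReal.ofReal (f q)) = ∫ q in s, f q • g q ∂ρ := by
  rw [setIntegral_withDensity_eq_setIntegral_toReal_smul₀ hf.ennreal_ofReal.restrict
    (ae_of_all _ fun _ => ENNReal.ofReal_lt_top) g hs]
  refine integral_congr_ae (ae_restrict_of_ae (hf_nonneg.mono fun q hq => ?_))
  simp only [ENNReal.toReal_ofReal hq]

lemma setAverage_withDensity_ofReal {f : α → ℝ} (hf : AEMeasurable f ρ) (hf_nonneg : 0 ≤ᵐ[ρ] f)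
    {s : Set α} (hs : MeasurableSet s) (g : α → F) :
    ⨍ q in s, g q ∂ρ.withDensity (fun q => ENNReal.ofReal (f q)) =
      (∫ q in s, f q ∂ρ)⁻¹ • ∫ q in s, f q • g q ∂ρ := by
  have hmass : (ρ.withDensity fun q => ENNReal.ofReal (f q)).real s = ∫ q in s, f q ∂ρ := by
    simpa only [setIntegral_const, smul_eq_mul, mul_one] using
      setIntegral_withDensity_ofReal hf hf_nonneg hs fun _ => (1 : ℝ)
  rw [setAverage_eq, hmass, setIntegral_withDensity_ofReal hf hf_nonneg hs]

end Densities

lemma subset_support_restrict_of_subset_closure_interior {α : Type*} [TopologicalSpace α]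
    [MeasurableSpace α] [OpensMeasurableSpace α] {ρ : Measure α} [ρ.IsOpenPosMeasure] {D : Set α}
    (hD : D ⊆ closure (interior D)) : D ⊆ (ρ.restrict D).support := by
  refine hD.trans (closure_minimal ?_ Measure.isClosed_support)
  simpa only [Measure.support_eq_univ, inter_univ] using
    Measure.interior_inter_support (μ := ρ) (s := D)

theorem stmt_11_general {E ι : Type*} [NormedAddCommGroup E] [InnerProductSpace ℝ E]
    [FiniteDimensional ℝ E] [MeasurableSpace E] [BorelSpace E] [Fintype ι] [Nonempty ι] {D : Set E}
    (hDc : IsCompact D) (hD : D ⊆ (volume.restrict D).support) {μ : E → ℝ}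
    (hμ : IntegrableOn μ D) (hμpos : ∀ᵐ q ∂volume.restrict D, 0 < μ q)
    {V : (ι → E) → ι → Set E} (hV : ∀ z i, V z i = {q ∈ D | ∀ j, ‖q - z i‖ ≤ ‖q - z j‖})
    {c : (ι → E) → ι → E} (hc : ∀ z i, c z i = (∫ q in V z i, μ q)⁻¹ • ∫ q in V z i, μ q • q)
    {C : Set (ι → E)} (hC : C = {z | Injective z ∧ (∀ i, z i ∈ D) ∧ ∀ i, z i = c z i})
    {x : ℕ → ι → E} (hxD : ∀ k i, x k i ∈ D) (hxinj : ∀ k, Injective (x k))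
    (hiter : ∀ k, x (k + 1) = c (x k)) : Tendsto (fun k => infDist (x k) C) atTop (𝓝 0) := by
  set ρ : Measure E := volume.restrict D
  set ν : Measure E := ρ.withDensity fun q => ENNReal.ofReal (μ q)
  have : IsFiniteMeasure ν := isFiniteMeasure_withDensity_ofReal hμ.2
  have hνρ : ν ≪ ρ := withDensity_absolutelyContinuous _ _
  have hρν : ρ ≪ ν := withDensity_absolutelyContinuous' hμ.aemeasurable.ennreal_ofReal
    (hμpos.mono fun q h => (ENNReal.ofReal_pos.2 h).ne')
  have hν_null : BisectorNull ν :=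
    .of_absolutelyContinuous (hνρ.trans Measure.absolutelyContinuous_restrict)
  have hν₂ : MemLp id 2 ν := by
    obtain ⟨R, hR⟩ := hDc.isBounded.exists_norm_le
    exact .of_bound aestronglyMeasurable_id R
      (hνρ.ae_le (ae_restrict_of_forall_mem hDc.measurableSet hR))
  have hlloyd : c = lloydMap ν := by
    funext z i
    have hVz : V z i = voronoiCell z i ∩ D := by
      rw [hV, inter_comm]
      simp only [← dist_eq_norm]
      rfl
    have hmeas := (isClosed_voronoiCell z i).measurableSet
    rw [hc, lloydMap, setAverage_withDensity_ofReal hμ.aemeasurable (hμpos.mono fun _ => le_of_lt)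
      hmeas, Measure.restrict_restrict hmeas, hVz]
  have hCν : C = centroidalVoronoi ν D := by
    rw [hC, hlloyd]
    ext z
    simp only [centroidalVoronoi, mem_ofPred_eq, IsFixedPt, funext_iff, eq_comm]
  rw [hCν]
  exact tendsto_infDist_centroidalVoronoi hν_null hν₂ hDc (hD.trans hρν.support_mono) hxD hxinj
    fun k => hlloyd ▸ hiter k

/-- Every solution of the Lloyd iteration `x(k+1) = c(V(x(k)))` (with respect to
a continuous strictly positive density `μ` on a compact convex polygonal region `D ⊆ ℝ²`)
whose iterates consist of distinct points converges to the set `C` of centroidal Voronoi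
configurations: `dist(x(k), C) → 0` as `k → ∞`. -/
theorem stmt_11 (D : Set E2) (hDc : IsCompact D) (hDconv : Convex ℝ D)
    (hDint : (interior D).Nonempty)
    (μ : E2 → ℝ) (hμcont : ContinuousOn μ D) (hμpos : ∀ q ∈ D, 0 < μ q)
    (N : ℕ) (hN : 0 < N)
    (V : (Fin N → E2) → Fin N → Set E2)
    (hV : ∀ z i, V z i = {q ∈ D | ∀ j, ‖q - z i‖ ≤ ‖q - z j‖})
    (c : (Fin N → E2) → Fin N → E2)
    (hc : ∀ z i, c z i = (∫ q in V z i, μ q)⁻¹ • ∫ q in V z i, μ q • q)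
    (C : Set (Fin N → E2))
    (hC : C = {z | Function.Injective z ∧ (∀ i, z i ∈ D) ∧ ∀ i, z i = c z i})
    (x : ℕ → Fin N → E2)
    (hxD : ∀ k i, x k i ∈ D)
    (hxinj : ∀ k, Function.Injective (x k))
    (hiter : ∀ k, x (k + 1) = c (x k)) :
    Tendsto (fun k => Metric.infDist (x k) C) atTop (nhds 0) := by
  have : Nonempty (Fin N) := ⟨⟨0, hN⟩⟩
  have hDcl : D ⊆ closure (interior D) := by
    rw [hDconv.closure_interior_eq_closure_of_nonempty_interior hDint]
    exact subset_closure
  exact stmt_11_general hDc (subset_support_restrict_of_subset_closure_interior hDcl)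
    (hμcont.integrableOn_compact hDc) (ae_restrict_of_forall_mem hDc.measurableSet hμpos)
    hV hc hC hxD hxinj hiter
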